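/- Let k and n be even integers with 0 < k < n. Then the real Wronski map is not surjective: there exists a nonzero polynomial w ∈ ℝ[t] with deg w ≤ k(n−k) such that there is no k-tuple of ℝ-linearly independent polynomials f₁,…,f_k ∈ ℝ[t], each of degree at most n−1, whose Wronskian Wr(f₁,…,f_k) is a nonzero real scalar multiple of w. [Theorem of Eremenko–Gabrielov on non-surjectivity of the real Wronski map when k and n are both even.] -/

import Mathlib

/-- The Wronskian of real polynomials `f 0, …, f (k-1)`: the determinant of the `k × k`
matrix whose `(i, j)` entry is the `i`-th derivative of `f j`. -/
noncomputable def Wr {k : ℕ} (f : Fin k → Polynomial ℝ) : Polynomial ℝ :=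
  Matrix.det (Matrix.of fun i j : Fin k => Polynomial.derivative^[(i : ℕ)] (f j))

open Polynomial in
/-- The family of polynomials of degree less than `n` whose coefficients are the rows of `M`. -/
noncomputable def rowPoly {k n : ℕ} (M : Matrix (Fin k) (Fin n) ℝ) (r : Fin k) : ℝ[X] :=
  ∑ i : Fin n, C (M r i) * X ^ (i : ℕ)

/-- The maximal minor of `M` on the columns `g 0, …, g (k-1)`. -/
noncomputable def maxMinor {k n : ℕ} (M : Matrix (Fin k) (Fin n) ℝ) (g : Fin k → Fin n) : ℝ :=
  (M.submatrix id g).det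

/-- The Vandermonde determinant of the exponents `g 0, …, g (k-1)`. -/
noncomputable def vand {k n : ℕ} (g : Fin k → Fin n) : ℝ :=
  (Matrix.vandermonde fun r => ((g r : ℕ) : ℝ)).det

/-- The sum of the exponents `g 0, …, g (k-1)`. -/
def expSum {k n : ℕ} (g : Fin k → Fin n) : ℕ := ∑ r, (g r : ℕ)

/-- The number of even exponents minus the number of odd exponents. -/
def parityExcess {k n : ℕ} (g : Fin k → Fin n) : ℤ := ∑ r, (-1) ^ (g r : ℕ)

/-- The coefficient of `X ^ m` in `X ^ (0 + 1 + ⋯ + (k-1)) * Wr (rowPoly M)`. -/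
noncomputable def wrCoeff {k n : ℕ} (M : Matrix (Fin k) (Fin n) ℝ) (m : ℕ) : ℝ :=
  ∑ g : Fin k → Fin n, if expSum g = m then (∏ r, M r (g r)) * vand g else 0

open Polynomial in
theorem X_pow_mul_iterate_derivative_X_pow (c i : ℕ) :
    (X : ℝ[X]) ^ i * derivative^[i] (X ^ c) = C ((descPochhammer ℝ i).eval (c : ℝ)) * X ^ c := by
  rw [iterate_derivative_X_pow_eq_C_mul, descPochhammer_eval_eq_descFactorial]
  rcases le_or_gt i c with h | h
  · rw [mul_left_comm, ← pow_add, Nat.add_sub_cancel' h]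
  · simp [Nat.descFactorial_eq_zero_iff_lt.2 h]

open Polynomial in
theorem X_pow_mul_Wr_rowPoly {k n : ℕ} (M : Matrix (Fin k) (Fin n) ℝ) :
    X ^ (∑ i : Fin k, (i : ℕ)) * Wr (rowPoly M) =
      ∑ g : Fin k → Fin n, C ((∏ r, M r (g r)) * vand g) * X ^ expSum g := by
  have hentry : ∀ i j : Fin k, (X : ℝ[X]) ^ (i : ℕ) * derivative^[(i : ℕ)] (rowPoly M j) =
      ∑ c : Fin n, C (M j c) * X ^ (c : ℕ) *
        C ((descPochhammer ℝ (i : ℕ)).eval ((c : ℕ) : ℝ)) := by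
    intro i j
    simp only [rowPoly, iterate_derivative_sum, iterate_derivative_C_mul, Finset.mul_sum]
    refine Finset.sum_congr rfl fun c _ => ?_
    rw [mul_left_comm, X_pow_mul_iterate_derivative_X_pow]
    ring
  rw [← Finset.prod_pow_eq_pow_sum, Wr, ← Matrix.det_mul_column, ← Matrix.det_transpose]
  have hmat : (Matrix.of fun i j : Fin k => (X : ℝ[X]) ^ (i : ℕ) *
      (Matrix.of fun i j : Fin k => derivative^[(i : ℕ)] (rowPoly M j)) i j).transpose =
      fun j => ∑ c : Fin n, fun i : Fin k => C (M j c) * X ^ (c : ℕ) *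
        C ((descPochhammer ℝ (i : ℕ)).eval ((c : ℕ) : ℝ)) := by
    ext1 j
    intro i
    simp only [Matrix.transpose_apply, Matrix.of_apply, hentry, Finset.sum_apply]
  rw [hmat]
  have := (Matrix.detRowAlternating (n := Fin k) (R := ℝ[X])).toMultilinearMap.map_sum
    (fun j (c : Fin n) (i : Fin k) => C (M j c) * X ^ (c : ℕ) *
        C ((descPochhammer ℝ (i : ℕ)).eval ((c : ℕ) : ℝ)))
  refine this.trans (Finset.sum_congr rfl fun g _ => ?_)
  have h1 := Matrix.det_mul_column (fun j => C (M j (g j)) * (X : ℝ[X]) ^ (g j : ℕ))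
    (Matrix.of fun j i : Fin k => C ((descPochhammer ℝ (i : ℕ)).eval ((g j : ℕ) : ℝ)))
  refine h1.trans ?_
  have h2 : (Matrix.of fun j i : Fin k =>
      (C ((descPochhammer ℝ (i : ℕ)).eval ((g j : ℕ) : ℝ)) : ℝ[X])).det = C (vand g) := by
    rw [vand, Matrix.det_eval_matrixOfPolynomials_eq_det_vandermonde _
      (fun i : Fin k => descPochhammer ℝ (i : ℕ)) (fun i => descPochhammer_natDegree ℝ i)
      (fun i => monic_descPochhammer ℝ i), RingHom.map_det]
    rfl
  rw [h2, Finset.prod_mul_distrib, Finset.prod_pow_eq_pow_sum, expSum, C_mul, map_prod]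
  ring

open Polynomial in
theorem coeff_X_pow_mul_Wr {k n : ℕ} (M : Matrix (Fin k) (Fin n) ℝ) (m : ℕ) :
    (X ^ (∑ i : Fin k, (i : ℕ)) * Wr (rowPoly M)).coeff m = wrCoeff M m := by
  rw [X_pow_mul_Wr_rowPoly, finsetSum_coeff, wrCoeff]
  refine Finset.sum_congr rfl fun g _ => ?_
  rw [coeff_C_mul_X_pow]
  simp only [eq_comm (a := m)]

open Polynomial in
theorem Wr_rowPoly_mul {k n : ℕ} (A : Matrix (Fin k) (Fin k) ℝ) (M : Matrix (Fin k) (Fin n) ℝ) :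
    Wr (rowPoly (A * M)) = C A.det * Wr (rowPoly M) := by
  have hrow : ∀ j, rowPoly (A * M) j = ∑ s, C (A j s) * rowPoly M s := by
    intro j
    simp only [rowPoly, Matrix.mul_apply, map_sum, Finset.sum_mul, Finset.mul_sum, C_mul]
    rw [Finset.sum_comm]
    simp only [mul_assoc]
  have hmat : (Matrix.of fun i j : Fin k => derivative^[(i : ℕ)] (rowPoly (A * M) j)) =
      (Matrix.of fun i j : Fin k => derivative^[(i : ℕ)] (rowPoly M j)) *
        (A.map (C : ℝ →+* ℝ[X])).transpose := by
    ext1 i j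
    simp only [Matrix.of_apply, hrow, iterate_derivative_sum, iterate_derivative_C_mul,
      Matrix.mul_apply, Matrix.transpose_apply, Matrix.map_apply]
    exact Finset.sum_congr rfl fun s _ => mul_comm _ _
  rw [Wr, hmat, Matrix.det_mul, Matrix.det_transpose, RingHom.map_det, mul_comm]
  rfl

theorem wrCoeff_mul {k n : ℕ} (A : Matrix (Fin k) (Fin k) ℝ) (M : Matrix (Fin k) (Fin n) ℝ)
    (m : ℕ) : wrCoeff (A * M) m = A.det * wrCoeff M m := by
  rw [← coeff_X_pow_mul_Wr, ← coeff_X_pow_mul_Wr, Wr_rowPoly_mul, mul_left_comm,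
    Polynomial.coeff_C_mul]

theorem maxMinor_mul {k n : ℕ} (A : Matrix (Fin k) (Fin k) ℝ) (M : Matrix (Fin k) (Fin n) ℝ)
    (g : Fin k → Fin n) : maxMinor (A * M) g = A.det * maxMinor M g := by
  rw [maxMinor, maxMinor, ← Matrix.det_mul]
  congr 1

theorem wrCoeff_rescale {k n : ℕ} (M : Matrix (Fin k) (Fin n) ℝ) (x : ℝ) (m : ℕ) :
    wrCoeff (Matrix.of fun r i => M r i * x ^ (i : ℕ)) m = x ^ m * wrCoeff M m := by
  rw [wrCoeff, wrCoeff, Finset.mul_sum]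
  refine Finset.sum_congr rfl fun g _ => ?_
  split_ifs with h
  · simp only [Matrix.of_apply, Finset.prod_mul_distrib, Finset.prod_pow_eq_pow_sum]
    rw [← h, expSum]
    ring
  · simp

theorem maxMinor_rescale {k n : ℕ} (M : Matrix (Fin k) (Fin n) ℝ) (x : ℝ) (g : Fin k → Fin n) :
    maxMinor (Matrix.of fun r i => M r i * x ^ (i : ℕ)) g = x ^ expSum g * maxMinor M g := by
  have := Matrix.det_mul_row (fun j => x ^ (g j : ℕ)) (M.submatrix id g)
  rw [Finset.prod_pow_eq_pow_sum] at this
  rw [maxMinor, maxMinor, expSum, ← this]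
  congr 1
  ext i j
  simp [mul_comm]

/-- The rows of `N` have pairwise distinct first nonzero columns `I r` and pairwise distinct last
nonzero columns `J r`. -/
structure IsAdapted {k n : ℕ} (N : Matrix (Fin k) (Fin n) ℝ) (I J : Fin k → Fin n) : Prop where
  injective_left : Function.Injective I
  injective_right : Function.Injective J
  left_ne_zero : ∀ r, N r (I r) ≠ 0
  right_ne_zero : ∀ r, N r (J r) ≠ 0
  left_le : ∀ r i, N r i ≠ 0 → I r ≤ i
  le_right : ∀ r i, N r i ≠ 0 → i ≤ J r

theorem exists_isAdapted_of_le_finrank {n : ℕ} (k : ℕ) :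
    ∀ V : Submodule ℝ (Fin n → ℝ), k ≤ Module.finrank ℝ V →
      ∃ (u : Matrix (Fin k) (Fin n) ℝ) (I J : Fin k → Fin n),
        (∀ r, u r ∈ V) ∧ IsAdapted u I J := by
  induction k with
  | zero =>
    intro V _
    exact ⟨0, Fin.elim0, Fin.elim0, fun r => r.elim0, fun r => r.elim0, fun r => r.elim0,
      fun r => r.elim0, fun r => r.elim0, fun r => r.elim0, fun r => r.elim0⟩
  | succ k ih =>
    intro V hV
    have first : ∀ f : Fin n → ℝ, f ≠ 0 → ∃ i, f i ≠ 0 ∧ ∀ j < i, f j = 0 := by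
      intro f hf
      obtain ⟨i, hi⟩ := Function.ne_iff.1 hf
      obtain ⟨m, hm⟩ := (Set.toFinite {i | f i ≠ 0}).exists_minimal ⟨i, hi⟩
      exact ⟨m, hm.1, fun j hj => by_contra fun h => absurd (hm.2 h hj.le) (not_le.2 hj)⟩
    have hne : V ≠ ⊥ := by
      rintro rfl
      simp at hV
    obtain ⟨f₀, hf₀V, hf₀⟩ := V.exists_mem_ne_zero_of_ne_bot hne
    obtain ⟨i₀, hi₀⟩ := first f₀ hf₀
    obtain ⟨m, ⟨f, hfV, hfm, hflt⟩, hmax⟩ :=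
      (Set.toFinite {i | ∃ f ∈ V, f i ≠ 0 ∧ ∀ j < i, f j = 0}).exists_maximal
        ⟨i₀, f₀, hf₀V, hi₀⟩
    obtain ⟨D, hfD, hDmax⟩ := (Set.toFinite {i | f i ≠ 0}).exists_maximal ⟨m, hfm⟩
    have hV' : k ≤ Module.finrank ℝ
        (V ⊓ LinearMap.ker (LinearMap.proj D : (Fin n → ℝ) →ₗ[ℝ] ℝ) : Submodule ℝ _) := by
      have h1 := Submodule.finrank_sup_add_finrank_inf_eq V
        (LinearMap.ker (LinearMap.proj D : (Fin n → ℝ) →ₗ[ℝ] ℝ))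
      have h2 := LinearMap.finrank_range_add_finrank_ker
        (LinearMap.proj D : (Fin n → ℝ) →ₗ[ℝ] ℝ)
      have h3 := Submodule.finrank_le
        (V ⊔ LinearMap.ker (LinearMap.proj D : (Fin n → ℝ) →ₗ[ℝ] ℝ))
      have h4 := Submodule.finrank_le
        (LinearMap.range (LinearMap.proj D : (Fin n → ℝ) →ₗ[ℝ] ℝ))
      rw [Module.finrank_self] at h4
      omega
    obtain ⟨u, I, J, huV, hu⟩ := ih _ hV'
    have huD : ∀ r, u r D = 0 := fun r => (huV r).2
    have hIm : ∀ r, I r < m := by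
      intro r
      have hur : ∀ j < I r, u r j = 0 := fun j hj =>
        by_contra fun h => absurd (hu.left_le r j h) (not_le.2 hj)
      refine lt_of_le_of_ne (le_of_not_gt fun hlt => absurd
        (hmax ⟨u r, (huV r).1, hu.left_ne_zero r, hur⟩ hlt.le) (not_le.2 hlt)) fun hIr => ?_
      have hurm : u r m ≠ 0 := hIr ▸ hu.left_ne_zero r
      by_cases h0 : u r - (u r m / f m) • f = 0
      · have hD := congrFun h0 D
        simp [huD r, hurm, hfm] at hD
        exact hfD hD
      · obtain ⟨i, hi, hilt⟩ := first _ h0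
        have hmi : m < i := by
          refine lt_of_le_of_ne (le_of_not_gt fun h => hi ?_) fun h => hi ?_
          · simp [hflt i h, hur i (hIr ▸ h)]
          · subst h
            simp [hfm]
        exact absurd (hmax ⟨_, V.sub_mem (huV r).1 (V.smul_mem _ hfV), hi, hilt⟩ hmi.le)
          (not_le.2 hmi)
    have hJD : ∀ r, J r ≠ D := fun r h => hu.right_ne_zero r (h ▸ huD r)
    refine ⟨(Fin.cons f u : Fin (k + 1) → Fin n → ℝ), Fin.cons m I, Fin.cons D J, ?_, ?_⟩
    · exact Fin.cases hfV fun r => (huV r).1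
    · refine ⟨Fin.cons_injective_iff.2 ⟨?_, hu.injective_left⟩,
        Fin.cons_injective_iff.2 ⟨?_, hu.injective_right⟩, ?_, ?_, ?_, ?_⟩
      · rintro ⟨r, hr⟩
        exact (hIm r).ne hr
      · rintro ⟨r, hr⟩
        exact hJD r hr
      · exact Fin.cases hfm hu.left_ne_zero
      · exact Fin.cases hfD hu.right_ne_zero
      · exact Fin.cases (fun i hi => le_of_not_gt fun h => hi (hflt i h)) hu.left_le
      · exact Fin.cases (fun i hi => le_of_not_gt fun h =>
          absurd (hDmax hi h.le) (not_le.2 h)) hu.le_right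

theorem expSum_comp_perm {k n : ℕ} (g : Fin k → Fin n) (σ : Equiv.Perm (Fin k)) :
    expSum (g ∘ σ) = expSum g :=
  Equiv.sum_comp σ fun r => (g r : ℕ)

theorem parityExcess_comp_perm {k n : ℕ} (g : Fin k → Fin n) (σ : Equiv.Perm (Fin k)) :
    parityExcess (g ∘ σ) = parityExcess g :=
  Equiv.sum_comp σ fun r => (-1 : ℤ) ^ (g r : ℕ)

theorem expSum_le_expSum {k n : ℕ} {g h : Fin k → Fin n} (hle : ∀ r, g r ≤ h r) :
    expSum g ≤ expSum h :=
  Finset.sum_le_sum fun r _ => hle r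

theorem eq_of_le_of_expSum_le {k n : ℕ} {g h : Fin k → Fin n} (hle : ∀ r, g r ≤ h r)
    (hsum : expSum h ≤ expSum g) : g = h := by
  have := (Finset.sum_eq_sum_iff_of_le (s := Finset.univ) (f := fun r => (g r : ℕ))
    (g := fun r => (h r : ℕ)) fun r _ => hle r).1 (le_antisymm (expSum_le_expSum hle) hsum)
  exact funext fun r => Fin.ext (this r (Finset.mem_univ r))

theorem vand_ne_zero {k n : ℕ} {g : Fin k → Fin n} (hg : Function.Injective g) : vand g ≠ 0 :=
  Matrix.det_vandermonde_ne_zero_iff.2 fun _ _ h => hg (Fin.ext (Nat.cast_injective h))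

theorem injective_of_maxMinor_ne_zero {k n : ℕ} {M : Matrix (Fin k) (Fin n) ℝ}
    {g : Fin k → Fin n} (h : maxMinor M g ≠ 0) : Function.Injective g := by
  intro a b hab
  by_contra hne
  exact h (Matrix.det_zero_of_column_eq hne fun r => by simp [hab])

namespace IsAdapted

variable {k n : ℕ} {N : Matrix (Fin k) (Fin n) ℝ} {I J : Fin k → Fin n}

theorem le (h : IsAdapted N I J) (r : Fin k) : I r ≤ J r :=
  h.left_le r _ (h.right_ne_zero r)

theorem exists_perm_of_maxMinor_ne_zero (h : IsAdapted N I J) {g : Fin k → Fin n}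
    (hg : maxMinor N g ≠ 0) :
    ∃ σ : Equiv.Perm (Fin k), ∀ r, I r ≤ g (σ r) ∧ g (σ r) ≤ J r := by
  rw [maxMinor, ← Matrix.det_transpose, Matrix.det_apply] at hg
  obtain ⟨σ, -, hσ⟩ := Finset.exists_ne_zero_of_sum_ne_zero hg
  have hprod : ∀ r, N r (g (σ r)) ≠ 0 := by
    intro r hr
    refine hσ (smul_eq_zero_of_right _ (Finset.prod_eq_zero (Finset.mem_univ r) ?_))
    simpa using hr
  exact ⟨σ, fun r => ⟨h.left_le r _ (hprod r), h.le_right r _ (hprod r)⟩⟩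

theorem parityExcess_eq_right (h : IsAdapted N I J) {g : Fin k → Fin n}
    (hg : maxMinor N g ≠ 0) (hsum : expSum J ≤ expSum g) : parityExcess g = parityExcess J := by
  obtain ⟨σ, hσ⟩ := h.exists_perm_of_maxMinor_ne_zero hg
  rw [← eq_of_le_of_expSum_le (g := g ∘ σ) (h := J) (fun r => (hσ r).2)
    (by rwa [expSum_comp_perm]), parityExcess_comp_perm]

theorem maxMinor_left_ne_zero (h : IsAdapted N I J) : maxMinor N I ≠ 0 := by
  have : maxMinor N I = ∏ r, N r (I r) := by
    rw [maxMinor, ← Matrix.det_transpose, Matrix.det_apply, Finset.sum_eq_single 1]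
    · simp
    · intro σ _ hσ
      by_contra hne
      have hprod : ∀ r, N r (I (σ r)) ≠ 0 := by
        intro r hr
        refine hne (smul_eq_zero_of_right _ (Finset.prod_eq_zero (Finset.mem_univ r) ?_))
        simpa using hr
      have := eq_of_le_of_expSum_le (g := I) (h := I ∘ σ) (fun r => h.left_le r _ (hprod r))
        (expSum_comp_perm I σ).le
      exact hσ (Equiv.ext fun r => (h.injective_left (congrFun this r)).symm)
    · simp
  rw [this]
  exact Finset.prod_ne_zero_iff.2 fun r _ => h.left_ne_zero r

theorem maxMinor_right_ne_zero (h : IsAdapted N I J) : maxMinor N J ≠ 0 := by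
  have : maxMinor N J = ∏ r, N r (J r) := by
    rw [maxMinor, ← Matrix.det_transpose, Matrix.det_apply, Finset.sum_eq_single 1]
    · simp
    · intro σ _ hσ
      by_contra hne
      have hprod : ∀ r, N r (J (σ r)) ≠ 0 := by
        intro r hr
        refine hne (smul_eq_zero_of_right _ (Finset.prod_eq_zero (Finset.mem_univ r) ?_))
        simpa using hr
      have := eq_of_le_of_expSum_le (g := J ∘ σ) (h := J) (fun r => h.le_right r _ (hprod r))
        (expSum_comp_perm J σ).ge
      exact hσ (Equiv.ext fun r => h.injective_right (congrFun this r))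
    · simp
  rw [this]
  exact Finset.prod_ne_zero_iff.2 fun r _ => h.right_ne_zero r

theorem wrCoeff_left (h : IsAdapted N I J) :
    wrCoeff N (expSum I) = (∏ r, N r (I r)) * vand I := by
  rw [wrCoeff, Finset.sum_eq_single I, if_pos rfl]
  · intro g _ hg
    split_ifs with hs
    · by_contra hne
      refine hg (eq_of_le_of_expSum_le (fun r => h.left_le r _ ?_) hs.le).symm
      exact Finset.prod_ne_zero_iff.1 (left_ne_zero_of_mul hne) r (Finset.mem_univ r)
    · rfl
  · simp

theorem wrCoeff_right (h : IsAdapted N I J) :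
    wrCoeff N (expSum J) = (∏ r, N r (J r)) * vand J := by
  rw [wrCoeff, Finset.sum_eq_single J, if_pos rfl]
  · intro g _ hg
    split_ifs with hs
    · by_contra hne
      refine hg (eq_of_le_of_expSum_le (fun r => h.le_right r _ ?_) hs.ge)
      exact Finset.prod_ne_zero_iff.1 (left_ne_zero_of_mul hne) r (Finset.mem_univ r)
    · rfl
  · simp

theorem wrCoeff_left_ne_zero (h : IsAdapted N I J) : wrCoeff N (expSum I) ≠ 0 := by
  rw [h.wrCoeff_left]
  exact mul_ne_zero (Finset.prod_ne_zero_iff.2 fun r _ => h.left_ne_zero r)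
    (vand_ne_zero h.injective_left)

theorem wrCoeff_right_ne_zero (h : IsAdapted N I J) : wrCoeff N (expSum J) ≠ 0 := by
  rw [h.wrCoeff_right]
  exact mul_ne_zero (Finset.prod_ne_zero_iff.2 fun r _ => h.right_ne_zero r)
    (vand_ne_zero h.injective_right)

theorem exists_between_of_wrCoeff_ne_zero (h : IsAdapted N I J) {m : ℕ} (hm : wrCoeff N m ≠ 0) :
    expSum I ≤ m ∧ m ≤ expSum J := by
  obtain ⟨g, -, hg⟩ := Finset.exists_ne_zero_of_sum_ne_zero hm
  rw [ite_ne_right_iff] at hg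
  have hprod := Finset.prod_ne_zero_iff.1 (left_ne_zero_of_mul hg.2)
  rw [← hg.1]
  exact ⟨expSum_le_expSum fun r => h.left_le r _ (hprod r (Finset.mem_univ r)),
    expSum_le_expSum fun r => h.le_right r _ (hprod r (Finset.mem_univ r))⟩

end IsAdapted

theorem exists_isAdapted_mul {k n : ℕ} {M : Matrix (Fin k) (Fin n) ℝ}
    (hM : LinearIndependent ℝ M.row) :
    ∃ (A : Matrix (Fin k) (Fin k) ℝ) (I J : Fin k → Fin n),
      A.det ≠ 0 ∧ IsAdapted (A * M) I J := by
  obtain ⟨u, I, J, hu, hadapted⟩ := exists_isAdapted_of_le_finrank k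
    (Submodule.span ℝ (Set.range M.row)) (by rw [finrank_span_eq_card hM, Fintype.card_fin])
  choose A hA using fun r => (Submodule.mem_span_range_iff_exists_fun ℝ).1 (hu r)
  have hAM : Matrix.of A * M = u := by
    ext r i
    rw [← hA r, Matrix.mul_apply, Finset.sum_apply]
    rfl
  refine ⟨Matrix.of A, I, J, fun h => hadapted.maxMinor_left_ne_zero ?_, hAM.symm ▸ hadapted⟩
  rw [← hAM, maxMinor_mul, h, zero_mul]

theorem linearIndependent_row_of_maxMinor_ne_zero {k n : ℕ} {M : Matrix (Fin k) (Fin n) ℝ}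
    {g : Fin k → Fin n} (h : maxMinor M g ≠ 0) : LinearIndependent ℝ M.row := by
  have := Matrix.linearIndependent_rows_of_det_ne_zero h
  exact LinearIndependent.of_comp (LinearMap.funLeft ℝ ℝ g) this

/-- If the maximal exponent `T` of the Wronskian is known, the column sets of size `T` carrying a
nonzero maximal minor all have the same parity excess. -/
theorem parityExcess_eq_of_top {k n : ℕ} {M : Matrix (Fin k) (Fin n) ℝ} {T : ℕ}
    (hT : ∀ m, T < m → wrCoeff M m = 0) {g h : Fin k → Fin n} (hg : maxMinor M g ≠ 0)
    (hh : maxMinor M h ≠ 0) (hgT : expSum g = T) (hhT : expSum h = T) :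
    parityExcess g = parityExcess h := by
  obtain ⟨A, I, J, hA, hAM⟩ := exists_isAdapted_mul (linearIndependent_row_of_maxMinor_ne_zero hg)
  have hJ : expSum J ≤ T := by
    refine le_of_not_gt fun hlt => hAM.wrCoeff_right_ne_zero ?_
    rw [wrCoeff_mul, hT _ hlt, mul_zero]
  have key : ∀ g, maxMinor M g ≠ 0 → expSum g = T → parityExcess g = parityExcess J :=
    fun g hg hgT => hAM.parityExcess_eq_right (by rw [maxMinor_mul]; exact mul_ne_zero hA hg)
      (hgT ▸ hJ)
  rw [key g hg hgT, key h hh hhT]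

theorem vand_mul_vand_mul_vand_mul_vand_pos {k n : ℕ} {I J : Fin k → Fin n}
    (hI : Function.Injective I) (hJ : Function.Injective J) {r q : Fin k} (hrq : r ≠ q)
    (hr : (J r : ℕ) = I r + 1) (hq : (J q : ℕ) = I q + 1)
    (hJI : ∀ x, x ≠ r → x ≠ q → J x = I x) (hpar : (I r : ℕ) % 2 = (I q : ℕ) % 2) :
    0 < (vand I * vand J) *
      (vand (Function.update I r (J r)) * vand (Function.update I q (J q))) := by
  simp only [vand, Matrix.det_vandermonde, ← Finset.prod_mul_distrib]
  refine Finset.prod_pos fun i _ => Finset.prod_pos fun j hj => ?_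
  have hij : i ≠ j := (Finset.mem_Ioi.1 hj).ne
  have hIij : ((I j : ℕ) : ℤ) - (I i : ℕ) ≠ 0 := by
    intro h
    exact hij (hI (Fin.ext (by omega)))
  have hJij : ((J j : ℕ) : ℤ) - (J i : ℕ) ≠ 0 := by
    intro h
    exact hij (hJ (Fin.ext (by omega)))
  have sq : ∀ {a b : ℤ}, a ≠ 0 → b ≠ 0 → 0 < (a * b) * (a * b) := fun ha hb =>
    mul_self_pos.2 (mul_ne_zero ha hb)
  have even_case : ∀ {a : ℤ}, a ≠ 0 → a % 2 = 0 → 0 < (a * a) * ((a - 1) * (a + 1)) := by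
    intro a ha hev
    refine mul_pos (mul_self_pos.2 ha) ?_
    rcases lt_or_gt_of_ne ha with h | h
    · exact mul_pos_of_neg_of_neg (by omega) (by omega)
    · exact mul_pos (by omega) (by omega)
  have key : (0 : ℤ) < ((((I j : ℕ) : ℤ) - (I i : ℕ)) * (((J j : ℕ) : ℤ) - (J i : ℕ))) *
      ((((Function.update I r (J r) j : Fin n) : ℕ) - ((Function.update I r (J r) i : Fin n) : ℕ))
      * (((Function.update I q (J q) j : Fin n) : ℕ) -
        ((Function.update I q (J q) i : Fin n) : ℕ))) := by
    simp only [Function.update_apply]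
    by_cases hir : i = r
    · subst hir
      by_cases hjq : j = q
      · subst hjq
        convert even_case hIij (by omega) using 1
        simp only [hrq, hrq.symm, ↓reduceIte, hr, hq]
        push_cast
        ring
      · convert sq hIij hJij using 1
        simp only [hrq, hij.symm, hjq, ↓reduceIte, hJI j hij.symm hjq]
        ring
    · by_cases hiq : i = q
      · subst hiq
        by_cases hjr : j = r
        · subst hjr
          convert even_case hIij (by omega) using 1
          simp only [hrq, hrq.symm, ↓reduceIte, hr, hq]
          push_cast
          ring
        · convert sq hIij hJij using 1
          simp only [hrq.symm, hij.symm, hjr, ↓reduceIte, hJI j hjr hij.symm]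
      · by_cases hjr : j = r
        · subst hjr
          convert sq hIij hJij using 1
          simp only [hrq, hij, hiq, ↓reduceIte, hJI i hir hiq]
          ring
        · by_cases hjq : j = q
          · subst hjq
            convert sq hIij hJij using 1
            simp only [hij, hir, hjr, ↓reduceIte, hJI i hir hiq]
          · convert sq hIij hJij using 1
            simp only [hir, hiq, hjr, hjq, ↓reduceIte, hJI i hir hiq, hJI j hjr hjq]
  exact_mod_cast key

/-- If the Wronskian is, up to a power of the variable, `1 + a t²` with `a > 0`, then the sets of
first and of last columns of an adapted matrix have the same parity excess. -/
theorem IsAdapted.parityExcess_left_eq_right {k n : ℕ} {N : Matrix (Fin k) (Fin n) ℝ}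
    {I J : Fin k → Fin n} (h : IsAdapted N I J) {D : ℕ} (hI : expSum I = D)
    (hJ : expSum J = D + 2) (hmid : wrCoeff N (D + 1) = 0)
    (hpos : 0 < wrCoeff N D * wrCoeff N (D + 2)) : parityExcess I = parityExcess J := by
  have hle : ∀ x, (I x : ℕ) ≤ J x := h.le
  have hsum : ∑ x, ((J x : ℕ) - (I x : ℕ)) = 2 := by
    have := Finset.sum_tsub_distrib Finset.univ fun x _ => hle x
    rw [this]
    change expSum J - expSum I = 2
    omega
  obtain ⟨r, -, hr0⟩ := Finset.exists_ne_zero_of_sum_ne_zero (hsum.trans_ne two_ne_zero)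
  rw [← Finset.add_sum_erase _ _ (Finset.mem_univ r)] at hsum
  by_cases hr2 : 2 ≤ (J r : ℕ) - (I r : ℕ)
  · have hzero : ∑ x ∈ Finset.univ.erase r, ((J x : ℕ) - (I x : ℕ)) = 0 := by omega
    rw [Finset.sum_eq_zero_iff] at hzero
    refine Finset.sum_congr rfl fun x _ => ?_
    by_cases hx : x = r
    · subst hx
      rw [show (J x : ℕ) = I x + 2 by have := hle x; omega, pow_add]
      norm_num
    · have := hzero x (by simp [hx])
      rw [show (J x : ℕ) = I x by have := hle x; omega]
  · have hsum' : ∑ x ∈ Finset.univ.erase r, ((J x : ℕ) - (I x : ℕ)) = 1 := by omega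
    obtain ⟨q, hq, hq0⟩ := Finset.exists_ne_zero_of_sum_ne_zero (hsum'.trans_ne one_ne_zero)
    have hqr : q ≠ r := Finset.ne_of_mem_erase hq
    rw [← Finset.add_sum_erase _ _ hq] at hsum'
    have hzero : ∑ x ∈ (Finset.univ.erase r).erase q, ((J x : ℕ) - (I x : ℕ)) = 0 := by omega
    rw [Finset.sum_eq_zero_iff] at hzero
    have hr : (J r : ℕ) = I r + 1 := by omega
    have hq : (J q : ℕ) = I q + 1 := by omega
    have hJI : ∀ x, x ≠ r → x ≠ q → J x = I x := fun x hxr hxq => by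
      have := hzero x (by simp [hxr, hxq])
      have := hle x
      exact Fin.ext (by omega)
    by_cases hpar : (I r : ℕ) % 2 = (I q : ℕ) % 2
    · exfalso
      set G := Function.update I r (J r) with hG
      set H := Function.update I q (J q) with hH
      have hGH : G ≠ H := by
        intro he
        have := congrArg Fin.val (congrFun he r)
        simp [hG, hH, hqr.symm] at this
        omega
      have hGsum : expSum G = D + 1 := by
        rw [← hI, expSum, expSum, ← Finset.add_sum_erase _ _ (Finset.mem_univ r),
          ← Finset.add_sum_erase (a := r) _ (fun x => (I x : ℕ)) (Finset.mem_univ r)]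
        have : ∑ x ∈ Finset.univ.erase r, (G x : ℕ) = ∑ x ∈ Finset.univ.erase r, (I x : ℕ) :=
          Finset.sum_congr rfl fun x hx => by rw [hG, Function.update_of_ne (by simpa using hx)]
        rw [this, hG, Function.update_self, hr]
        ring
      have hHsum : expSum H = D + 1 := by
        rw [← hI, expSum, expSum, ← Finset.add_sum_erase _ _ (Finset.mem_univ q),
          ← Finset.add_sum_erase (a := q) _ (fun x => (I x : ℕ)) (Finset.mem_univ q)]
        have : ∑ x ∈ Finset.univ.erase q, (H x : ℕ) = ∑ x ∈ Finset.univ.erase q, (I x : ℕ) :=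
          Finset.sum_congr rfl fun x hx => by rw [hH, Function.update_of_ne (by simpa using hx)]
        rw [this, hH, Function.update_self, hq]
        ring
      have hmid' : (∏ x, N x (G x)) * vand G + (∏ x, N x (H x)) * vand H = 0 := by
        rw [← hmid, wrCoeff, Finset.sum_eq_add G H hGH, if_pos hGsum, if_pos hHsum]
        · rintro g - ⟨hgG, hgH⟩
          rw [ite_eq_right_iff]
          intro hgs
          by_contra hne
          have hprod : ∀ x, N x (g x) ≠ 0 := fun x =>
            Finset.prod_ne_zero_iff.1 (left_ne_zero_of_mul hne) x (Finset.mem_univ x)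
          have hgI : ∀ x, I x ≤ g x := fun x => h.left_le x _ (hprod x)
          have hgJ : ∀ x, g x ≤ J x := fun x => h.le_right x _ (hprod x)
          by_cases hgr : g r = J r
          · refine hgG (eq_of_le_of_expSum_le (fun x => ?_) (hgs.trans hGsum.symm).le).symm
            by_cases hx : x = r
            · subst hx
              simp [hG, hgr]
            · simpa [hG, hx] using hgI x
          · refine hgH (eq_of_le_of_expSum_le (fun x => ?_) (hHsum.trans hgs.symm).le)
            by_cases hxq : x = q
            · subst hxq
              simpa [hH] using hgJ x
            · rw [hH, Function.update_of_ne hxq]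
              by_cases hxr : x = r
              · subst hxr
                have h1 : (g x : ℕ) ≤ J x := hgJ x
                have h2 : (g x : ℕ) ≠ J x := fun h => hgr (Fin.ext h)
                exact Fin.le_def.2 (by omega)
              · rw [← hJI x hxr hxq]
                exact hgJ x
        · simp
        · simp
      have hprod : (∏ x, N x (G x)) * (∏ x, N x (H x)) =
          (∏ x, N x (I x)) * ∏ x, N x (J x) := by
        rw [← Finset.prod_mul_distrib, ← Finset.prod_mul_distrib]
        refine Finset.prod_congr rfl fun x _ => ?_
        by_cases hxr : x = r
        · subst hxr
          simp [hG, hH, hqr.symm, mul_comm]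
        · by_cases hxq : x = q
          · subst hxq
            simp [hG, hH, hqr]
          · simp [hG, hH, hxr, hxq, hJI x hxr hxq]
      have hvand := vand_mul_vand_mul_vand_mul_vand_pos h.injective_left h.injective_right
        hqr.symm hr hq hJI hpar
      rw [← hJ, ← hI, h.wrCoeff_left, h.wrCoeff_right] at hpos
      have hneg : ((∏ x, N x (G x)) * vand G) * ((∏ x, N x (H x)) * vand H) ≤ 0 := by
        rw [eq_neg_of_add_eq_zero_left hmid']
        nlinarith [mul_self_nonneg ((∏ x, N x (H x)) * vand H)]
      have h1 : ((∏ x, N x (I x)) * vand I) * ((∏ x, N x (J x)) * vand J) *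
          (((∏ x, N x (G x)) * vand G) * ((∏ x, N x (H x)) * vand H)) =
          ((∏ x, N x (I x)) * ∏ x, N x (J x)) ^ 2 *
            ((vand I * vand J) * (vand G * vand H)) := by
        rw [← hprod]
        linear_combination (vand I * vand J * vand G * vand H *
          (∏ x, N x (G x)) * (∏ x, N x (H x))) * -hprod
      have h2 : 0 < ((∏ x, N x (I x)) * ∏ x, N x (J x)) ^ 2 := by
        exact sq_pos_of_ne_zero (mul_ne_zero (Finset.prod_ne_zero_iff.2 fun x _ => h.left_ne_zero x)
          (Finset.prod_ne_zero_iff.2 fun x _ => h.right_ne_zero x))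
      nlinarith [mul_pos h2 hvand, mul_nonneg hpos.le (neg_nonneg.2 hneg)]
    · have hrest : ∑ x ∈ (Finset.univ.erase r).erase q, (-1 : ℤ) ^ (I x : ℕ) =
          ∑ x ∈ (Finset.univ.erase r).erase q, (-1 : ℤ) ^ (J x : ℕ) :=
        Finset.sum_congr rfl fun x hx => by
          rw [hJI x (Finset.ne_of_mem_erase (Finset.mem_of_mem_erase hx))
            (Finset.ne_of_mem_erase hx)]
      have hqmem : q ∈ Finset.univ.erase r := by simp [hqr]
      rw [parityExcess, parityExcess, ← Finset.add_sum_erase _ _ (Finset.mem_univ r),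
        ← Finset.add_sum_erase _ _ hqmem,
        ← Finset.add_sum_erase (a := r) _ (fun x => (-1 : ℤ) ^ (J x : ℕ)) (Finset.mem_univ r),
        ← Finset.add_sum_erase _ (fun x => (-1 : ℤ) ^ (J x : ℕ)) hqmem, hrest, hr, hq]
      rcases Nat.even_or_odd (I r : ℕ) with h1 | h1 <;>
        rcases Nat.even_or_odd (I q : ℕ) with h2 | h2
      · exact absurd ((Nat.even_iff.1 h1).trans (Nat.even_iff.1 h2).symm) hpar
      · simp [pow_succ, h1.neg_one_pow, h2.neg_one_pow]
      · simp [pow_succ, h1.neg_one_pow, h2.neg_one_pow]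
      · exact absurd ((Nat.odd_iff.1 h1).trans (Nat.odd_iff.1 h2).symm) hpar

theorem sum_range_card_le_sum (m : ℕ) : ∀ S : Finset ℕ, S.card = m →
    ∑ i ∈ Finset.range m, i ≤ ∑ i ∈ S, i ∧
      (∑ i ∈ S, i ≤ ∑ i ∈ Finset.range m, i → S = Finset.range m) := by
  induction m with
  | zero =>
    intro S hS
    simp [Finset.card_eq_zero.1 hS]
  | succ m ih =>
    intro S hS
    have hne : S.Nonempty := Finset.card_pos.1 (by omega)
    set s := S.max' hne with hs
    have hsS : s ∈ S := S.max'_mem hne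
    have hsub : S ⊆ Finset.range (s + 1) := fun x hx =>
      Finset.mem_range.2 (Nat.lt_succ_of_le (S.le_max' x hx))
    have hms : m ≤ s := by
      have := Finset.card_le_card hsub
      rw [Finset.card_range] at this
      omega
    obtain ⟨h1, h2⟩ := ih (S.erase s) (by rw [Finset.card_erase_of_mem hsS]; omega)
    rw [← Finset.add_sum_erase _ _ hsS, Finset.sum_range_succ]
    refine ⟨by omega, fun h => ?_⟩
    rw [← Finset.insert_erase hsS, h2 (by omega), Finset.range_add_one]
    congr 1
    omega

theorem sum_neg_one_pow_range {m : ℕ} (hm : Even m) :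
    ∑ i ∈ Finset.range m, (-1 : ℤ) ^ i = 0 := by
  rw [Finset.sum_range, Fin.sum_neg_one_pow, if_pos hm]

/-- If an even number of distinct exponents has a sum exceeding the least possible one by one, the
number of even exponents exceeds the number of odd ones by two. -/
theorem sum_neg_one_pow_eq_two {k : ℕ} (hk : 0 < k) (hke : Even k) {g : Fin k → ℕ}
    (hg : Function.Injective g) (hsum : ∑ r, g r = ∑ i : Fin k, (i : ℕ) + 1) :
    ∑ r, (-1 : ℤ) ^ g r = 2 := by
  classical
  obtain ⟨m, rfl⟩ : ∃ m, k = m + 1 := ⟨k - 1, by omega⟩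
  set S := Finset.univ.image g with hS
  have hcard : S.card = m + 1 := by
    rw [hS, Finset.card_image_of_injective _ hg, Finset.card_univ, Fintype.card_fin]
  have himage : ∀ {α : Type} [AddCommMonoid α] (φ : ℕ → α), ∑ r, φ (g r) = ∑ i ∈ S, φ i := by
    intro α _ φ
    rw [hS, Finset.sum_image hg.injOn]
  rw [himage fun i => i, ← Finset.sum_range fun i => i] at hsum
  rw [himage fun i => (-1 : ℤ) ^ i]
  obtain ⟨s, hsS, hs⟩ : ∃ s ∈ S, m + 1 ≤ s := by
    by_contra! h
    have : S = Finset.range (m + 1) :=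
      Finset.eq_of_subset_of_card_le (fun x hx => Finset.mem_range.2 (h x hx))
        (by rw [hcard, Finset.card_range])
    rw [this] at hsum
    omega
  obtain ⟨h1, h2⟩ := sum_range_card_le_sum m (S.erase s)
    (by rw [Finset.card_erase_of_mem hsS, hcard, Nat.add_sub_cancel])
  rw [← Finset.add_sum_erase _ _ hsS, Finset.sum_range_succ] at hsum
  have hsm : s = m + 1 := by omega
  have hodd : Odd m := by
    rwa [Nat.even_add_one, Nat.not_even_iff_odd] at hke
  have h0 := sum_neg_one_pow_range hke
  rw [Finset.sum_range_succ, hodd.neg_one_pow] at h0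
  rw [← Finset.add_sum_erase _ _ hsS, h2 (by omega), hsm, hke.neg_one_pow]
  omega

theorem parityExcess_eq_two {k n : ℕ} (hk : 0 < k) (hke : Even k) {g : Fin k → Fin n}
    (hg : Function.Injective g) (hsum : expSum g = ∑ i : Fin k, (i : ℕ) + 1) :
    parityExcess g = 2 :=
  sum_neg_one_pow_eq_two hk hke (fun _ _ h => hg (Fin.ext h)) hsum

theorem parityExcess_eq_neg_two {k n : ℕ} (hk : 0 < k) (hkn : k < n) (hke : Even k)
    (hne : Even n) {g : Fin k → Fin n} (hg : Function.Injective g)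
    (hsum : expSum g + 1 = k * (n - k) + ∑ i : Fin k, (i : ℕ)) : parityExcess g = -2 := by
  have hrev : ∑ r, (-1 : ℤ) ^ (n - 1 - (g r : ℕ)) = 2 := by
    refine sum_neg_one_pow_eq_two hk hke (fun a b h => hg (Fin.ext ?_)) ?_
    · have h1 := (g a).isLt
      have h2 := (g b).isLt
      omega
    · have h1 : ∑ r, (n - 1 - (g r : ℕ)) + expSum g = k * (n - 1) := by
        rw [expSum, ← Finset.sum_add_distrib]
        rw [Finset.sum_congr rfl fun r _ => Nat.sub_add_cancel (Nat.le_sub_one_of_lt (g r).isLt)]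
        simp
      have h2 : (∑ i : Fin k, (i : ℕ)) * 2 = k * (k - 1) := by
        rw [← Finset.sum_range fun i => i, Finset.sum_range_id_mul_two]
      obtain ⟨m, rfl⟩ : ∃ m, k = m + 1 := ⟨k - 1, by omega⟩
      obtain ⟨l, rfl⟩ : ∃ l, n = m + 1 + l := ⟨n - (m + 1), by omega⟩
      rw [show m + 1 + l - 1 = m + l by omega] at h1 ⊢
      rw [show m + 1 + l - (m + 1) = l by omega] at hsum
      rw [Nat.add_sub_cancel] at h2
      nlinarith
  have hflip : ∀ r, (-1 : ℤ) ^ (n - 1 - (g r : ℕ)) = -(-1) ^ (g r : ℕ) := by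
    intro r
    have hlt := (g r).isLt
    have h1 : (-1 : ℤ) ^ (n - 1 - (g r : ℕ)) * (-1) ^ ((g r : ℕ) + 1) = 1 := by
      rw [← pow_add, show n - 1 - (g r : ℕ) + ((g r : ℕ) + 1) = n by omega, hne.neg_one_pow]
    rcases Nat.even_or_odd (g r : ℕ) with h | h
    · simp [pow_succ, h.neg_one_pow] at h1 ⊢
      omega
    · simp [pow_succ, h.neg_one_pow] at h1 ⊢
      omega
  simp only [hflip, Finset.sum_neg_distrib] at hrev
  rw [parityExcess]
  omega

/-- Matrices with entries in `[-1, 1]` and some maximal minor equal to `1`; every matrix of full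
row rank has the same row space as one of these. -/
def normalizedMatrices (k n : ℕ) : Set (Matrix (Fin k) (Fin n) ℝ) :=
  {M | (∀ r i, M r i ∈ Set.Icc (-1 : ℝ) 1) ∧ ∃ h, maxMinor M h = 1}

theorem continuous_maxMinor {k n : ℕ} (g : Fin k → Fin n) :
    Continuous fun M : Matrix (Fin k) (Fin n) ℝ => maxMinor M g :=
  (continuous_id.matrix_submatrix id g).matrix_det

theorem continuous_wrCoeff {k n : ℕ} (m : ℕ) :
    Continuous fun M : Matrix (Fin k) (Fin n) ℝ => wrCoeff M m := by
  refine continuous_finsetSum _ fun g _ => ?_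
  split_ifs
  · exact (continuous_finsetProd _ fun r _ => continuous_id.matrix_elem r (g r)).mul
      continuous_const
  · exact continuous_const

theorem isCompact_normalizedMatrices (k n : ℕ) : IsCompact (normalizedMatrices k n) := by
  have hbox : IsCompact (Set.pi Set.univ fun _ : Fin k => Set.pi Set.univ fun _ : Fin n =>
      Set.Icc (-1 : ℝ) 1) :=
    isCompact_univ_pi fun _ => isCompact_univ_pi fun _ => isCompact_Icc
  have hclosed : IsClosed {M : Matrix (Fin k) (Fin n) ℝ | ∃ h, maxMinor M h = 1} := by
    simp only [Set.ofPred_exists]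
    exact isClosed_iUnion_of_finite fun h =>
      isClosed_eq (continuous_maxMinor h) continuous_const
  have hset : normalizedMatrices k n = (Set.pi Set.univ fun _ : Fin k => Set.pi Set.univ
      fun _ : Fin n => Set.Icc (-1 : ℝ) 1) ∩ {M | ∃ h, maxMinor M h = 1} := by
    ext M
    exact ⟨fun h => ⟨fun r _ i _ => h.1 r i, h.2⟩,
      fun h => ⟨fun r i => h.1 r trivial i trivial, h.2⟩⟩
  rw [hset]
  exact hbox.inter_right hclosed

open Matrix in
theorem exists_mul_mem_normalizedMatrices {k n : ℕ} {M : Matrix (Fin k) (Fin n) ℝ}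
    {g : Fin k → Fin n} (hg : maxMinor M g ≠ 0) :
    ∃ A : Matrix (Fin k) (Fin k) ℝ, A.det ≠ 0 ∧ A * M ∈ normalizedMatrices k n := by
  obtain ⟨h, -, hmax⟩ := Finset.exists_max_image Finset.univ (fun h => |maxMinor M h|)
    ⟨g, Finset.mem_univ g⟩
  have hh : maxMinor M h ≠ 0 := fun h0 => hg <| by
    have := hmax g (Finset.mem_univ g)
    rw [h0, abs_zero] at this
    exact abs_nonpos_iff.1 this
  have hdet : (M.submatrix id h)⁻¹.det = (maxMinor M h)⁻¹ := by
    rw [Matrix.det_nonsing_inv, Ring.inverse_eq_inv', maxMinor]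
  refine ⟨(M.submatrix id h)⁻¹, by rw [hdet]; exact inv_ne_zero hh, fun r i => ?_, h, ?_⟩
  · have hentry : ((M.submatrix id h)⁻¹ * M) r i =
        (maxMinor M h)⁻¹ * maxMinor M (Function.update h r i) := by
      have h1 : ((M.submatrix id h)⁻¹ * M) r i =
          ((M.submatrix id h)⁻¹ *ᵥ fun s => M s i) r := rfl
      rw [h1, Matrix.inv_def, Matrix.smul_mulVec, ← Matrix.cramer_eq_adjugate_mulVec,
        Pi.smul_apply, Matrix.cramer_apply, Ring.inverse_eq_inv', smul_eq_mul, maxMinor, maxMinor]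
      congr 2
      ext a b
      by_cases hb : b = r
      · subst hb
        simp
      · simp [hb]
    rw [hentry, Set.mem_Icc, ← abs_le, abs_mul, abs_inv, ← div_eq_inv_mul]
    exact div_le_one_of_le₀ (hmax _ (Finset.mem_univ _)) (abs_nonneg _)
  · rw [maxMinor_mul, hdet, inv_mul_cancel₀ hh]

theorem exists_wrCoeff_ne_zero {k n : ℕ} {M : Matrix (Fin k) (Fin n) ℝ}
    (hM : M ∈ normalizedMatrices k n) : ∃ m, wrCoeff M m ≠ 0 := by
  obtain ⟨-, h, hh⟩ := hM
  obtain ⟨A, I, J, -, hAM⟩ := exists_isAdapted_mul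
    (linearIndependent_row_of_maxMinor_ne_zero (hh.trans_ne one_ne_zero))
  refine ⟨expSum I, fun h0 => hAM.wrCoeff_left_ne_zero ?_⟩
  rw [wrCoeff_mul, h0, mul_zero]

/-- If the exponents of the Wronskian are exactly `D` and `D + 2`, with equal coefficients, then
some column sets `I` and `J` of these sizes carry nonzero maximal minors and have the same parity
excess. -/
theorem exists_parityExcess_eq {k n : ℕ} {N : Matrix (Fin k) (Fin n) ℝ}
    (hN : N ∈ normalizedMatrices k n) {D : ℕ} {e : ℝ} (he : e ≠ 0) (hD : wrCoeff N D = e)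
    (hD2 : wrCoeff N (D + 2) = e) (hrest : ∀ m, m ≠ D → m ≠ D + 2 → wrCoeff N m = 0) :
    ∃ I J : Fin k → Fin n, expSum I = D ∧ expSum J = D + 2 ∧ maxMinor N I ≠ 0 ∧
      maxMinor N J ≠ 0 ∧ parityExcess I = parityExcess J := by
  obtain ⟨-, h, hh⟩ := hN
  obtain ⟨A, I, J, hA, hAN⟩ := exists_isAdapted_mul
    (linearIndependent_row_of_maxMinor_ne_zero (hh.trans_ne one_ne_zero))
  have hcoeff : ∀ m, wrCoeff N m ≠ 0 → m = D ∨ m = D + 2 := fun m hm => by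
    by_contra! hne
    exact hm (hrest m hne.1 hne.2)
  have hnz : ∀ m, wrCoeff N m ≠ 0 → wrCoeff (A * N) m ≠ 0 := fun m hm => by
    rw [wrCoeff_mul]
    exact mul_ne_zero hA hm
  have h1 := hAN.exists_between_of_wrCoeff_ne_zero (hnz D (hD ▸ he))
  have h2 := hAN.exists_between_of_wrCoeff_ne_zero (hnz (D + 2) (hD2 ▸ he))
  have hIleft := hAN.wrCoeff_left_ne_zero
  have hJright := hAN.wrCoeff_right_ne_zero
  rw [wrCoeff_mul] at hIleft hJright
  have hI : expSum I = D := by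
    have := hcoeff _ (right_ne_zero_of_mul hIleft)
    omega
  have hJ : expSum J = D + 2 := by
    have := hcoeff _ (right_ne_zero_of_mul hJright)
    omega
  have hIm := hAN.maxMinor_left_ne_zero
  have hJm := hAN.maxMinor_right_ne_zero
  rw [maxMinor_mul] at hIm hJm
  refine ⟨I, J, hI, hJ, right_ne_zero_of_mul hIm, right_ne_zero_of_mul hJm,
    hAN.parityExcess_left_eq_right hI hJ ?_ ?_⟩
  · rw [wrCoeff_mul, hrest _ (by omega) (by omega), mul_zero]
  · rw [wrCoeff_mul, wrCoeff_mul, hD, hD2]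
    exact mul_self_pos.2 (mul_ne_zero hA he)

/-- Every real matrix whose shifted Wronskian is a nonzero multiple of `q` has parity excess `2` on
all column sets of size `D` with nonzero maximal minor. -/
def ParityRigid (k n : ℕ) (q : Polynomial ℝ) (D : ℕ) : Prop :=
  ∀ (M : Matrix (Fin k) (Fin n) ℝ) (c : ℝ), c ≠ 0 → (∀ m, wrCoeff M m = c * q.coeff m) →
    ∀ g : Fin k → Fin n, expSum g = D → maxMinor M g ≠ 0 → parityExcess g = 2

open Filter Topology in
theorem tendsto_left_of_mul_eq {x y z : ℕ → ℝ} {y₀ z₀ : ℝ} (hxy : ∀ s, y s = x s * z s)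
    (hy : Tendsto y atTop (𝓝 y₀)) (hz : Tendsto z atTop (𝓝 z₀)) (hz₀ : z₀ ≠ 0) :
    Tendsto x atTop (𝓝 (y₀ / z₀)) := by
  refine (hy.div hz hz₀).congr' ?_
  filter_upwards [hz.eventually_ne hz₀] with s hs
  rw [Pi.div_apply, hxy, mul_div_cancel_right₀ _ hs]

open Filter Topology Polynomial in
/-- The limiting argument: `M` converges to a matrix with Wronskian `q`, while the rescaled
matrices `N` converge to a matrix with Wronskian `t ^ D * (1 + t ^ 2)`. -/
theorem ParityRigid.eventually_of_tendsto {k n : ℕ} {q : ℝ[X]} {D : ℕ}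
    (hrigid : ParityRigid k n q D) (hqD : q.coeff D ≠ 0) (hq : ∀ m, D < m → q.coeff m = 0)
    {δ c β : ℕ → ℝ} {M N : ℕ → Matrix (Fin k) (Fin n) ℝ} {M₀ N₀ : Matrix (Fin k) (Fin n) ℝ}
    (hM₀ : M₀ ∈ normalizedMatrices k n) (hN₀ : N₀ ∈ normalizedMatrices k n)
    (hM : Tendsto M atTop (𝓝 M₀)) (hN : Tendsto N atTop (𝓝 N₀))
    (hδ : Tendsto δ atTop (𝓝 0)) (hδ0 : ∀ s, δ s ≠ 0)
    (hMc : ∀ s m, wrCoeff (M s) m = c s * (q * (1 + C (δ s ^ 2) * X ^ 2)).coeff m)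
    (hNc : ∀ s m, wrCoeff (N s) m = β s * ((δ s)⁻¹ ^ m * wrCoeff (M s) m))
    (hNm : ∀ s g, maxMinor (N s) g = β s * ((δ s)⁻¹ ^ expSum g * maxMinor (M s) g)) :
    ∀ᶠ s in atTop, ∀ g, expSum g = D + 2 → maxMinor (M s) g ≠ 0 → parityExcess g = 2 := by
  set b : ℕ → ℝ := fun m => (q * X ^ 2).coeff m with hb
  have hbD2 : b (D + 2) = q.coeff D := coeff_mul_X_pow q 2 D
  have hbtop : ∀ m, D + 2 < m → b m = 0 := fun m hm => by
    rw [hb]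
    simp only [coeff_mul_X_pow']
    rw [if_pos (by omega), hq _ (by omega)]
  have hcoeff : ∀ s m, (q * (1 + C (δ s ^ 2) * X ^ 2)).coeff m =
      q.coeff m + δ s ^ 2 * b m := by
    intro s m
    rw [mul_add, mul_one, coeff_add, mul_left_comm, coeff_C_mul]
  simp only [hcoeff] at hMc
  have hMlim : ∀ m, Tendsto (fun s => wrCoeff (M s) m) atTop (𝓝 (wrCoeff M₀ m)) := fun m =>
    ((continuous_wrCoeff m).tendsto M₀).comp hM
  have hNlim : ∀ m, Tendsto (fun s => wrCoeff (N s) m) atTop (𝓝 (wrCoeff N₀ m)) := fun m =>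
    ((continuous_wrCoeff m).tendsto N₀).comp hN
  have hfactor : ∀ m, Tendsto (fun s => q.coeff m + δ s ^ 2 * b m) atTop (𝓝 (q.coeff m)) := by
    intro m
    simpa using ((hδ.pow 2).mul_const (b m)).const_add (q.coeff m)
  obtain ⟨c₀, hc₀⟩ : ∃ c₀, Tendsto c atTop (𝓝 c₀) :=
    ⟨_, tendsto_left_of_mul_eq (fun s => hMc s D) (hMlim D) (hfactor D) hqD⟩
  have hM₀c : ∀ m, wrCoeff M₀ m = c₀ * q.coeff m := fun m =>
    tendsto_nhds_unique (hMlim m)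
      ((hc₀.mul (hfactor m)).congr fun s => (hMc s m).symm)
  have hc₀0 : c₀ ≠ 0 := by
    rintro rfl
    obtain ⟨m, hm⟩ := exists_wrCoeff_ne_zero hM₀
    exact hm (by rw [hM₀c, zero_mul])
  set e : ℕ → ℝ := fun s => β s * (δ s)⁻¹ ^ D * c s with he
  have hND2 : ∀ s, wrCoeff (N s) (D + 2) = e s * q.coeff D := by
    intro s
    rw [hNc, hMc, hq _ (by omega), hbD2, he, pow_add]
    have h1 : δ s * (δ s)⁻¹ = 1 := mul_inv_cancel₀ (hδ0 s)
    linear_combination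
      β s * (δ s)⁻¹ ^ D * c s * q.coeff D * (δ s * (δ s)⁻¹ + 1) * h1
  obtain ⟨e₀, he₀⟩ : ∃ e₀, Tendsto e atTop (𝓝 e₀) :=
    ⟨_, tendsto_left_of_mul_eq hND2 (hNlim (D + 2)) tendsto_const_nhds hqD⟩
  have hN₀D2 : wrCoeff N₀ (D + 2) = e₀ * q.coeff D :=
    tendsto_nhds_unique (hNlim (D + 2))
      ((he₀.mul_const _).congr fun s => (hND2 s).symm)
  have hN₀D : wrCoeff N₀ D = e₀ * q.coeff D := by
    refine tendsto_nhds_unique (hNlim D) ((he₀.mul (hfactor D)).congr fun s => ?_)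
    rw [hNc, hMc, he]
    ring
  have hN₀rest : ∀ m, m ≠ D → m ≠ D + 2 → wrCoeff N₀ m = 0 := by
    intro m hmD hmD2
    rcases lt_or_gt_of_ne hmD with hlt | hgt
    · have hpow : Tendsto (fun s => δ s ^ (D - m)) atTop (𝓝 0) := by
        simpa [Nat.sub_ne_zero_of_lt hlt] using hδ.pow (D - m)
      have := he₀.mul (hpow.mul (hfactor m))
      rw [zero_mul, mul_zero] at this
      refine tendsto_nhds_unique (hNlim m) (this.congr fun s => ?_)
      have hsplit : (δ s)⁻¹ ^ m = (δ s)⁻¹ ^ D * δ s ^ (D - m) := by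
        rw [← Nat.add_sub_cancel' hlt.le, pow_add, mul_assoc, Nat.add_sub_cancel_left, ← mul_pow,
          inv_mul_cancel₀ (hδ0 s), one_pow, mul_one]
      rw [hNc, hMc, he, hsplit]
      ring
    · by_cases hm1 : m = D + 1
      · subst hm1
        have := he₀.mul (hδ.mul_const (b (D + 1)))
        rw [zero_mul, mul_zero] at this
        refine tendsto_nhds_unique (hNlim _) (this.congr fun s => ?_)
        rw [hNc, hMc, he, hq _ (by omega), pow_succ]
        have h1 : δ s * (δ s)⁻¹ = 1 := mul_inv_cancel₀ (hδ0 s)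
        linear_combination -(β s * (δ s)⁻¹ ^ D * c s * b (D + 1) * δ s) * h1
      · refine tendsto_nhds_unique (hNlim m) (tendsto_const_nhds.congr fun s => ?_)
        rw [hNc, hMc, hq _ hgt, hbtop _ (by omega)]
        simp
  have he₀0 : e₀ ≠ 0 := by
    rintro rfl
    obtain ⟨m, hm⟩ := exists_wrCoeff_ne_zero hN₀
    refine hm ?_
    by_cases hmD : m = D
    · rw [hmD, hN₀D, zero_mul]
    · by_cases hmD2 : m = D + 2
      · rw [hmD2, hN₀D2, zero_mul]
      · exact hN₀rest m hmD hmD2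
  obtain ⟨I, J, hID, hJD, hI, hJ, hIJ⟩ :=
    exists_parityExcess_eq hN₀ (mul_ne_zero he₀0 hqD) hN₀D hN₀D2 hN₀rest
  have hMlimI : c₀ * maxMinor N₀ I = e₀ * maxMinor M₀ I := by
    refine tendsto_nhds_unique
      (hc₀.mul (((continuous_maxMinor I).tendsto N₀).comp hN))
      ((he₀.mul (((continuous_maxMinor I).tendsto M₀).comp hM)).congr fun s => ?_)
    simp only [Function.comp_apply, hNm, hID, he]
    ring
  have hM₀I : maxMinor M₀ I ≠ 0 := by
    refine right_ne_zero_of_mul (a := e₀) ?_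
    rw [← hMlimI]
    exact mul_ne_zero hc₀0 hI
  have hJ2 : parityExcess J = 2 := hIJ ▸ hrigid M₀ c₀ hc₀0 hM₀c I hID hM₀I
  filter_upwards [(((continuous_maxMinor J).tendsto N₀).comp hN).eventually_ne hJ]
    with s hs g hg hgm
  rw [Function.comp_apply, hNm] at hs
  rw [← hJ2]
  refine parityExcess_eq_of_top (fun m hm => ?_) hgm
    (right_ne_zero_of_mul (right_ne_zero_of_mul hs)) hg hJD
  rw [hMc, hq _ (by omega), hbtop _ hm]
  simp

open Filter Topology Polynomial in
theorem ParityRigid.exists_mul {k n : ℕ} {q : ℝ[X]} {D : ℕ} (hrigid : ParityRigid k n q D)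
    (hqD : q.coeff D ≠ 0) (hq : ∀ m, D < m → q.coeff m = 0) :
    ∃ x : ℝ, x ≠ 0 ∧ ParityRigid k n (q * (1 + C (x ^ 2) * X ^ 2)) (D + 2) := by
  by_contra! hcon
  have hδ0 : ∀ s : ℕ, (1 / ((s : ℝ) + 1)) ≠ 0 := fun s => Nat.one_div_pos_of_nat.ne'
  have hstep : ∀ s : ℕ, ∃ (M N : Matrix (Fin k) (Fin n) ℝ) (c β : ℝ) (g : Fin k → Fin n),
      M ∈ normalizedMatrices k n ∧ N ∈ normalizedMatrices k n ∧
      (∀ m, wrCoeff M m = c * (q * (1 + C ((1 / ((s : ℝ) + 1)) ^ 2) * X ^ 2)).coeff m) ∧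
      (∀ m, wrCoeff N m = β * ((1 / ((s : ℝ) + 1))⁻¹ ^ m * wrCoeff M m)) ∧
      (∀ h, maxMinor N h = β * ((1 / ((s : ℝ) + 1))⁻¹ ^ expSum h * maxMinor M h)) ∧
      expSum g = D + 2 ∧ maxMinor M g ≠ 0 ∧ parityExcess g ≠ 2 := by
    intro s
    have hs := hcon _ (hδ0 s)
    simp only [ParityRigid, not_forall] at hs
    obtain ⟨M, c, -, hM, g, hgD, hgM, hg⟩ := hs
    obtain ⟨A, hA, hAM⟩ := exists_mul_mem_normalizedMatrices hgM
    have hgAM : maxMinor (A * M) g ≠ 0 := by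
      rw [maxMinor_mul]
      exact mul_ne_zero hA hgM
    obtain ⟨B, hB, hBN⟩ := exists_mul_mem_normalizedMatrices
      (M := Matrix.of fun r i => (A * M) r i * (1 / ((s : ℝ) + 1))⁻¹ ^ (i : ℕ)) (g := g) (by
        rw [maxMinor_rescale]
        exact mul_ne_zero (pow_ne_zero _ (inv_ne_zero (hδ0 s))) hgAM)
    refine ⟨A * M, _, A.det * c, B.det, g, hAM, hBN, fun m => ?_, fun m => ?_,
      fun h => ?_, hgD, hgAM, hg⟩
    · rw [wrCoeff_mul, hM, mul_assoc]
    · rw [wrCoeff_mul, wrCoeff_rescale]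
    · rw [maxMinor_mul, maxMinor_rescale]
  choose M N c β g hM hN hMc hNc hNm hgD hgM hg using hstep
  have : FirstCountableTopology (Matrix (Fin k) (Fin n) ℝ) :=
    inferInstanceAs (FirstCountableTopology (Fin k → Fin n → ℝ))
  obtain ⟨⟨M₀, N₀⟩, ⟨hM₀, hN₀⟩, φ, hφ, hlim⟩ :=
    ((isCompact_normalizedMatrices k n).prod (isCompact_normalizedMatrices k n)).tendsto_subseq
      (x := fun s => (M s, N s)) fun s => ⟨hM s, hN s⟩
  have hev := hrigid.eventually_of_tendsto hqD hq
    (δ := fun s => 1 / ((φ s : ℝ) + 1)) (c := c ∘ φ) (β := β ∘ φ) (M := M ∘ φ) (N := N ∘ φ)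
    hM₀ hN₀ ((continuous_fst.tendsto _).comp hlim) ((continuous_snd.tendsto _).comp hlim)
    (tendsto_one_div_add_atTop_nhds_zero_nat.comp hφ.tendsto_atTop)
    (fun s => hδ0 (φ s)) (fun s => hMc (φ s)) (fun s => hNc (φ s))
    (fun s => hNm (φ s))
  obtain ⟨s, hs⟩ := hev.exists
  exact hg (φ s) (hs (g (φ s)) (hgD (φ s)) (hgM (φ s)))

open Polynomial in
theorem exists_parityRigid {k n : ℕ} (hk : 0 < k) (hke : Even k) (j : ℕ) :
    ∃ w : ℝ[X], w.natDegree = 2 * j + 1 ∧ ParityRigid k n (X ^ (∑ i : Fin k, (i : ℕ)) * w)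
      (∑ i : Fin k, (i : ℕ) + (2 * j + 1)) := by
  induction j with
  | zero =>
    exact ⟨X, by simp, fun M c _ _ g hg hgM =>
      parityExcess_eq_two hk hke (injective_of_maxMinor_ne_zero hgM) hg⟩
  | succ j ih =>
    obtain ⟨w, hw, hrigid⟩ := ih
    have hw0 : w ≠ 0 := by
      rintro rfl
      simp at hw
    have hlead : (X ^ (∑ i : Fin k, (i : ℕ)) * w).coeff
        (∑ i : Fin k, (i : ℕ) + (2 * j + 1)) = w.leadingCoeff := by
      rw [add_comm, coeff_X_pow_mul, leadingCoeff, hw]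
    obtain ⟨x, hx, hxrigid⟩ := hrigid.exists_mul
      (by rw [hlead]; exact leadingCoeff_ne_zero.2 hw0) (fun m hm => by
        rw [coeff_X_pow_mul', if_pos (by omega)]
        exact coeff_eq_zero_of_natDegree_lt (by omega))
    have hfac : (1 + C (x ^ 2) * X ^ 2 : ℝ[X]).natDegree = 2 := by
      rw [add_comm]
      compute_degree!
    refine ⟨w * (1 + C (x ^ 2) * X ^ 2), ?_, ?_⟩
    · rw [natDegree_mul hw0 (ne_zero_of_natDegree_gt (n := 1) (by omega)), hw, hfac]
      ring
    · rw [← mul_assoc]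
      exact hxrigid

open Polynomial in
theorem exists_rowPoly_eq {k n : ℕ} {f : Fin k → ℝ[X]} (hf : LinearIndependent ℝ f)
    (hdeg : ∀ r, (f r).natDegree < n) :
    ∃ M : Matrix (Fin k) (Fin n) ℝ, rowPoly M = f ∧ LinearIndependent ℝ M.row := by
  let L : (Fin n → ℝ) →ₗ[ℝ] ℝ[X] := ∑ i : Fin n, (monomial (i : ℕ)).comp (LinearMap.proj i)
  have hL : ∀ r, L (fun i => (f r).coeff i) = f r := fun r => by
    conv_rhs => rw [(f r).as_sum_range' n (hdeg r), Finset.sum_range]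
    simp [L]
  refine ⟨Matrix.of fun r i => (f r).coeff i, ?_, LinearIndependent.of_comp L ?_⟩
  · ext1 r
    rw [← hL r, rowPoly]
    simp [L, C_mul_X_pow_eq_monomial]
  · convert hf
    exact funext hL

/-- **Theorem of Eremenko–Gabrielov.** If `k` and `n` are both even with `0 < k < n`,
then the real Wronski map is not surjective: there is a nonzero real polynomial `w`
of degree at most `k(n-k)` such that no `k`-tuple of ℝ-linearly independent real
polynomials of degree at most `n-1` has Wronskian a nonzero scalar multiple of `w`. -/
theorem real_wronski_map_not_surjective (k n : ℕ) (hk : 0 < k) (hkn : k < n)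
    (hke : Even k) (hne : Even n) :
    ∃ w : Polynomial ℝ, w ≠ 0 ∧ w.degree ≤ (k * (n - k) : ℕ) ∧
      ¬ ∃ f : Fin k → Polynomial ℝ, LinearIndependent ℝ f ∧
          (∀ i, (f i).degree ≤ (n - 1 : ℕ)) ∧
          ∃ c : ℝ, c ≠ 0 ∧ Wr f = Polynomial.C c * w := by
  obtain ⟨j, hj⟩ : ∃ j, k * (n - k) = 2 * j + 2 := by
    obtain ⟨a, ha⟩ := hke.mul_right (n - k)
    have : 0 < k * (n - k) := Nat.mul_pos hk (Nat.sub_pos_of_lt hkn)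
    exact ⟨a - 1, by omega⟩
  obtain ⟨w, hw, hrigid⟩ := exists_parityRigid (n := n) hk hke j
  have hw0 : w ≠ 0 := Polynomial.ne_zero_of_natDegree_gt (n := 0) (by omega)
  refine ⟨w, hw0, Polynomial.natDegree_le_iff_degree_le.1 (by omega), ?_⟩
  rintro ⟨f, hf, hdeg, c, hc, hWr⟩
  obtain ⟨M, rfl, hM⟩ := exists_rowPoly_eq (n := n) hf fun r => by
    have := Polynomial.natDegree_le_iff_degree_le.2 (hdeg r)
    omega
  set C₀ := ∑ i : Fin k, (i : ℕ) with hC₀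
  have hMc : ∀ m, wrCoeff M m = c * (Polynomial.X ^ C₀ * w).coeff m := fun m => by
    rw [← coeff_X_pow_mul_Wr, hWr, mul_left_comm, Polynomial.coeff_C_mul]
  obtain ⟨A, I, J, hA, hAM⟩ := exists_isAdapted_mul hM
  have htop : wrCoeff (A * M) (C₀ + (2 * j + 1)) ≠ 0 := by
    rw [wrCoeff_mul, hMc, add_comm C₀, Polynomial.coeff_X_pow_mul, ← hw]
    exact mul_ne_zero hA (mul_ne_zero hc (Polynomial.leadingCoeff_ne_zero.2 hw0))
  have hle : expSum J ≤ C₀ + (2 * j + 1) := by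
    by_contra! hlt
    refine hAM.wrCoeff_right_ne_zero ?_
    rw [wrCoeff_mul, hMc, Polynomial.coeff_X_pow_mul', if_pos (by omega),
      Polynomial.coeff_eq_zero_of_natDegree_lt (by omega), mul_zero, mul_zero]
  have hJ : expSum J = C₀ + (2 * j + 1) :=
    le_antisymm hle (hAM.exists_between_of_wrCoeff_ne_zero htop).2
  have hJM := hAM.maxMinor_right_ne_zero
  rw [maxMinor_mul] at hJM
  have h1 := hrigid M c hc hMc J hJ (right_ne_zero_of_mul hJM)
  have h2 := parityExcess_eq_neg_two hk hkn hke hne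
    (injective_of_maxMinor_ne_zero (right_ne_zero_of_mul hJM)) (by omega)
  omega
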